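/- Let R = {1,…,11}, C = {12,…,22}, S = {23,…,33}, and let γ₁ = (1 2)(3 4)(5 6)(12 13)(14 15)(16 17)(23 24)(25 26)(27 28) and γ₁₄ = (3 5)(4 6)(9 11)(12 14)(13 15)(19 22)(23 25)(24 26)(29 33) be permutations of R∪C∪S. There is no Latin square of order 11 in triple system representation on point classes R, C, S that admits both γ₁ and γ₁₄ as autoparatopisms. -/

import Mathlib

/-!
Both permutations preserve the point classes, so a triple with two fixed points has its third point
fixed as well: the points fixed by `g1` (five in each class) carry a subsquare of order 5, and the
points fixed by both (three in each class) carry a subsquare of order 3 inside it. A proper subsquare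
has at most half the order of the square, and `5 < 2 * 3`.

Concretely, row 8 is fixed by `g1` but moved by `g14`. In the columns 17, 19, 20, fixed by both, it
can only hold symbols fixed by `g1` but not by `g14` (`symbol_of_row_eight`), and there are just two
of these, 28 and 32. So a symbol is repeated in row 8.
-/

open Pointwise

/-- The 33 points, numbered 0,…,32 (point k of the paper corresponds to k − 1). -/
abbrev P33 : Type := Fin 33

/-- The row class R = {1,…,11} of the paper, i.e. values 0,…,10. -/
def R33 : Set P33 := {x | x.val < 11}

/-- The column class C = {12,…,22} of the paper, i.e. values 11,…,21. -/
def C33 : Set P33 := {x | 11 ≤ x.val ∧ x.val < 22}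

/-- The symbol class S = {23,…,33} of the paper, i.e. values 22,…,32. -/
def S33 : Set P33 := {x | 22 ≤ x.val}

/-- A Latin square of order 11 in triple system representation on R, C, S. -/
def IsLatin (L : Set (Set P33)) : Prop :=
  (∀ t ∈ L, ∃ r ∈ R33, ∃ c ∈ C33, ∃ s ∈ S33, t = {r, c, s}) ∧
  (∀ x y : P33,
    ((x ∈ R33 ∧ y ∈ C33) ∨ (x ∈ R33 ∧ y ∈ S33) ∨ (x ∈ C33 ∧ y ∈ S33)) →
    ∃! t, t ∈ L ∧ x ∈ t ∧ y ∈ t)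

/-- γ₁ = (1 2)(3 4)(5 6)(12 13)(14 15)(16 17)(23 24)(25 26)(27 28). -/
def g1 : Equiv.Perm P33 :=
  Equiv.swap 0 1 * Equiv.swap 2 3 * Equiv.swap 4 5 *
  Equiv.swap 11 12 * Equiv.swap 13 14 * Equiv.swap 15 16 *
  Equiv.swap 22 23 * Equiv.swap 24 25 * Equiv.swap 26 27

/-- γ₁₄ = (3 5)(4 6)(9 11)(12 14)(13 15)(19 22)(23 25)(24 26)(29 33). -/
def g14 : Equiv.Perm P33 :=
  Equiv.swap 2 4 * Equiv.swap 3 5 * Equiv.swap 8 10 *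
  Equiv.swap 11 13 * Equiv.swap 12 14 * Equiv.swap 18 21 *
  Equiv.swap 22 24 * Equiv.swap 23 25 * Equiv.swap 28 32

/-- An automorphism fixing two points of different classes fixes the triple through them. -/
lemma smul_triple_eq {L : Set (Set P33)} (hL : IsLatin L) {g : Equiv.Perm P33} (hg : g • L = L)
    {x y : P33} (hxy : (x ∈ R33 ∧ y ∈ C33) ∨ (x ∈ R33 ∧ y ∈ S33) ∨ (x ∈ C33 ∧ y ∈ S33))
    (hx : g x = x) (hy : g y = y) {t : Set P33} (ht : t ∈ L) (hxt : x ∈ t) (hyt : y ∈ t) :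
    g • t = t := by
  refine (hL.2 x y hxy).unique ⟨?_, ?_, ?_⟩ ⟨ht, hxt, hyt⟩
  · rw [← hg]
    exact Set.smul_mem_smul_set ht
  · exact ⟨x, hxt, hx⟩
  · exact ⟨y, hyt, hy⟩

/-- In a column fixed by both permutations, row 8 holds a symbol fixed by `g1` and moved by `g14`. -/
lemma symbol_of_row_eight {L : Set (Set P33)} (hL : IsLatin L) (h1 : g1 • L = L)
    (h14 : g14 • L = L) {c : P33} (hc : c = 17 ∨ c = 19 ∨ c = 20) :
    ∃ s : P33, (s = 28 ∨ s = 32) ∧ ({8, c, s} : Set P33) ∈ L := by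
  have h8R : (8 : P33) ∈ R33 := by simp [R33]
  have hcC : c ∈ C33 := by rcases hc with rfl | rfl | rfl <;> simp [C33]
  obtain ⟨t, ⟨htL, h8t, hct⟩, -⟩ := hL.2 8 c (Or.inl ⟨h8R, hcC⟩)
  obtain ⟨r, hr, c', hc', s, hs, rfl⟩ := hL.1 t htL
  simp only [R33, C33, S33, Set.mem_ofPred_eq] at hr hc' hs h8R hcC
  obtain rfl : 8 = r := by
    simp only [Set.mem_insert_iff, Set.mem_singleton_iff, Fin.ext_iff] at h8t ⊢
    omega
  obtain rfl : c = c' := by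
    simp only [Set.mem_insert_iff, Set.mem_singleton_iff, Fin.ext_iff] at hct ⊢
    omega
  refine ⟨s, ?_, htL⟩
  have hst : s ∈ ({8, c, s} : Set P33) := by simp
  have hg1s : g1 s ∈ ({8, c, s} : Set P33) := by
    have h := smul_triple_eq hL h1 (Or.inl ⟨h8R, hcC⟩) (by decide)
      (by rcases hc with rfl | rfl | rfl <;> decide) htL h8t hct
    rw [← h]
    exact ⟨s, hst, rfl⟩
  -- If `g14` fixed `s`, it would fix the triple through `c` and `s`, so this triple would contain `10 = g14 8`.
  have hg14s : g14 s ≠ s := by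
    intro hfix
    have h := smul_triple_eq hL h14 (Or.inr (Or.inr ⟨hcC, hs⟩))
      (by rcases hc with rfl | rfl | rfl <;> decide) hfix htL hct hst
    have h10 : g14 8 ∈ ({8, c, s} : Set P33) := by
      rw [← h]
      exact ⟨8, h8t, rfl⟩
    rw [show g14 8 = 10 by decide] at h10
    simp only [Set.mem_insert_iff, Set.mem_singleton_iff, Fin.ext_iff] at h10
    omega
  simp only [Set.mem_insert_iff, Set.mem_singleton_iff] at hg1s
  clear htL h8t hct hst
  revert s
  rcases hc with rfl | rfl | rfl <;> decide

/-- A symbol occurs only once in row 8. -/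
lemma column_unique {L : Set (Set P33)} (hL : IsLatin L) {c d s : P33} (hc : c ∈ C33)
    (hs : s ∈ S33) (h : ({8, c, s} : Set P33) ∈ L) (h' : ({8, d, s} : Set P33) ∈ L) : c = d := by
  have h8R : (8 : P33) ∈ R33 := by simp [R33]
  have heq : ({8, c, s} : Set P33) = {8, d, s} :=
    (hL.2 8 s (Or.inr (Or.inl ⟨h8R, hs⟩))).unique ⟨h, by simp, by simp⟩ ⟨h', by simp, by simp⟩
  have hcd : c ∈ ({8, d, s} : Set P33) := by
    rw [← heq]
    simp
  simp only [C33, S33, Set.mem_ofPred_eq, Set.mem_insert_iff, Set.mem_singleton_iff,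
    Fin.ext_iff] at hc hs hcd ⊢
  omega

/-- No Latin square of order 11 admits both γ₁ and γ₁₄ as autoparatopisms. -/
theorem no_latin_square_admits_g1_g14 :
    ¬ ∃ L : Set (Set P33), IsLatin L ∧ g1 • L = L ∧ g14 • L = L := by
  rintro ⟨L, hL, h1, h14⟩
  obtain ⟨s, hs, hsL⟩ := symbol_of_row_eight hL h1 h14 (c := 17) (by simp)
  obtain ⟨u, hu, huL⟩ := symbol_of_row_eight hL h1 h14 (c := 19) (by simp)
  obtain ⟨v, hv, hvL⟩ := symbol_of_row_eight hL h1 h14 (c := 20) (by simp)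
  have hsS : s ∈ S33 := by rcases hs with rfl | rfl <;> simp [S33]
  have huS : u ∈ S33 := by rcases hu with rfl | rfl <;> simp [S33]
  have hsu : s ≠ u := by
    rintro rfl
    exact absurd (column_unique hL (by simp [C33]) hsS hsL huL) (by decide)
  have hsv : s ≠ v := by
    rintro rfl
    exact absurd (column_unique hL (by simp [C33]) hsS hsL hvL) (by decide)
  have huv : u ≠ v := by
    rintro rfl
    exact absurd (column_unique hL (by simp [C33]) huS huL hvL) (by decide)
  grind
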